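/- Let k > 0 and let X be an integrable real-valued random variable on a probability space, and define F(q) = E[ρ_k(X − q)] for q ∈ ℝ. Then a point q₀ ∈ ℝ is a minimizer of F over ℝ (i.e., F(q₀) ≤ F(q) for all q ∈ ℝ) if and only if E[ψ_k(X − q₀)] = 0. -/

import Mathlib

open MeasureTheory

/-- The Huber influence function `ψ_k(t) = max (min t k) (-k)`. -/
noncomputable def huberPsi (k t : ℝ) : ℝ := max (min t k) (-k)

/-- The Huber loss `ρ_k(t) = t²/2` for `|t| ≤ k` and `ρ_k(t) = k|t| − k²/2` otherwise. -/
noncomputable def huberRho (k t : ℝ) : ℝ :=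
  if |t| ≤ k then t ^ 2 / 2 else k * |t| - k ^ 2 / 2

/-!
The Huber loss is a Legendre transform, `ρ_k(t) = sup {u t - u² / 2 : |u| ≤ k}`, and the supremum
is attained at `u = ψ_k(t)`. Hence `ψ_k(t)` is a subgradient of `ρ_k` at `t`, and integrating the
subgradient inequality shows that `-E[ψ_k(X - q)]` is a subgradient of `F(q) = E[ρ_k(X - q)]`.
It depends continuously on `q`, and a continuous choice of subgradients is a gradient; so a
minimizer of `F` makes it vanish, while a vanishing subgradient at `q₀` makes `q₀` a minimizer.
-/

section Integral

variable {Ω E F : Type*} [MeasurableSpace Ω] {μ : Measure Ω} [IsFiniteMeasure μ]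
  [NormedAddCommGroup F] {X : Ω → E}

lemma continuous_integral_comp_sub_of_bound [TopologicalSpace E] [FirstCountableTopology E]
    [AddGroup E] [IsTopologicalAddGroup E] [NormedSpace ℝ F] {g : E → F} (hg : Continuous g) {C : ℝ}
    (hC : ∀ x, ‖g x‖ ≤ C) (hX : AEStronglyMeasurable X μ) :
    Continuous fun q => ∫ ω, g (X ω - q) ∂μ :=
  continuous_of_dominated
    (fun _ => hg.comp_aestronglyMeasurable (hX.sub aestronglyMeasurable_const))
    (fun q => .of_forall fun ω => hC (X ω - q)) (integrable_const C)
    (.of_forall fun _ => by fun_prop)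

lemma integrable_comp_of_lipschitzWith [NormedAddCommGroup E] {f : E → F} {K : NNReal}
    (hf : LipschitzWith K f) (hX : Integrable X μ) : Integrable (fun ω => f (X ω)) μ := by
  have hf_sub : LipschitzWith K fun x => f x - f 0 := by
    simpa using hf.sub (LipschitzWith.const (f 0))
  have hint : Integrable (fun ω => f (X ω) - f 0) μ :=
    memLp_one_iff_integrable.1 (hf_sub.comp_memLp (sub_self _) (memLp_one_iff_integrable.2 hX))
  exact (hint.add (integrable_const (f 0))).congr (.of_forall fun _ => sub_add_cancel _ _)

end Integral

section Subgradient

open scoped InnerProductSpace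

variable {E : Type*} [NormedAddCommGroup E] [InnerProductSpace ℝ E]

/-- `g` selects at every point of the space a subgradient of `f` (in the sense of convex analysis),
represented as a vector through the inner product. -/
def IsSubgradientField (f : E → ℝ) (g : E → E) : Prop :=
  ∀ x y, f x + ⟪g x, y - x⟫_ℝ ≤ f y

namespace IsSubgradientField

variable {f : E → ℝ} {g : E → E}

lemma sub_le_inner (h : IsSubgradientField f g) (x y : E) : f y - f x ≤ ⟪g y, y - x⟫_ℝ := by
  have hyx := h y x
  rw [← neg_sub y x, inner_neg_right] at hyx
  linarith

lemma lipschitzWith (h : IsSubgradientField f g) {C : ℝ} (hC : ∀ x, ‖g x‖ ≤ C) :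
    LipschitzWith C.toNNReal f :=
  LipschitzWith.of_le_add_mul' C fun x y => by
    calc f x ≤ f y + ⟪g x, x - y⟫_ℝ := by linarith [h.sub_le_inner y x]
      _ ≤ f y + ‖g x‖ * ‖x - y‖ := by gcongr; exact real_inner_le_norm _ _
      _ ≤ f y + C * dist x y := by rw [dist_eq_norm]; gcongr; exact hC x

lemma hasGradientAt [CompleteSpace E] (h : IsSubgradientField f g) {x : E}
    (hg : ContinuousAt g x) : HasGradientAt f (g x) x := by
  have remainder_le (y : E) : ‖f y - f x - ⟪g x, y - x⟫_ℝ‖ ≤ ‖g y - g x‖ * ‖y - x‖ := by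
    have remainder_nonneg : 0 ≤ f y - f x - ⟪g x, y - x⟫_ℝ := by linarith [h x y]
    calc ‖f y - f x - ⟪g x, y - x⟫_ℝ‖ = f y - f x - ⟪g x, y - x⟫_ℝ :=
          Real.norm_of_nonneg remainder_nonneg
      _ ≤ ⟪g y - g x, y - x⟫_ℝ := by rw [inner_sub_left]; linarith [h.sub_le_inner x y]
      _ ≤ ‖g y - g x‖ * ‖y - x‖ := real_inner_le_norm _ _
  rw [hasGradientAt_iff_isLittleO, Asymptotics.isLittleO_iff]
  intro c hc
  filter_upwards [Metric.continuousAt_iff'.1 hg c hc] with y hy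
  rw [dist_eq_norm] at hy
  exact (remainder_le y).trans (by gcongr)

lemma forall_le_iff_eq_zero [CompleteSpace E] (h : IsSubgradientField f g) {x : E}
    (hg : ContinuousAt g x) : (∀ y, f x ≤ f y) ↔ g x = 0 := by
  constructor
  · intro hmin
    have hloc : IsLocalMin f x := .of_forall hmin
    simpa using hloc.hasFDerivAt_eq_zero (h.hasGradientAt hg).hasFDerivAt
  · intro hx y
    simpa [hx] using h x y

variable {Ω : Type*} [MeasurableSpace Ω] {μ : Measure Ω} [IsFiniteMeasure μ] [CompleteSpace E]
  {C : ℝ} {X : Ω → E}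

lemma integral_comp_sub (h : IsSubgradientField f g) (hg : Continuous g) (hC : ∀ x, ‖g x‖ ≤ C)
    (hX : Integrable X μ) :
    IsSubgradientField (fun q => ∫ ω, f (X ω - q) ∂μ) fun q => -∫ ω, g (X ω - q) ∂μ := by
  intro p q
  have hf_int (r : E) : Integrable (fun ω => f (X ω - r)) μ :=
    integrable_comp_of_lipschitzWith (h.lipschitzWith hC) (hX.sub (integrable_const r))
  have hg_int : Integrable (fun ω => g (X ω - p)) μ :=
    .of_bound (hg.comp_aestronglyMeasurable (hX.sub (integrable_const p)).aestronglyMeasurable) C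
      (.of_forall fun ω => hC (X ω - p))
  calc ∫ ω, f (X ω - p) ∂μ + ⟪-∫ ω, g (X ω - p) ∂μ, q - p⟫_ℝ
      = ∫ ω, f (X ω - p) ∂μ + ∫ ω, ⟪p - q, g (X ω - p)⟫_ℝ ∂μ := by
        rw [integral_inner hg_int, inner_neg_left, ← inner_neg_right, neg_sub, real_inner_comm]
    _ = ∫ ω, (f (X ω - p) + ⟪p - q, g (X ω - p)⟫_ℝ) ∂μ :=
        (integral_add (hf_int p) (hg_int.const_inner _)).symm
    _ ≤ ∫ ω, f (X ω - q) ∂μ :=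
        integral_mono ((hf_int p).add (hg_int.const_inner _)) (hf_int q) fun ω => by
          simpa [real_inner_comm] using h (X ω - p) (X ω - q)

theorem forall_integral_comp_sub_le_iff_integral_eq_zero (h : IsSubgradientField f g)
    (hg : Continuous g) (hC : ∀ x, ‖g x‖ ≤ C) (hX : Integrable X μ) (q₀ : E) :
    (∀ q, ∫ ω, f (X ω - q₀) ∂μ ≤ ∫ ω, f (X ω - q) ∂μ) ↔ ∫ ω, g (X ω - q₀) ∂μ = 0 := by
  have hcont := continuous_integral_comp_sub_of_bound hg hC hX.aestronglyMeasurable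
  exact ((h.integral_comp_sub hg hC hX).forall_le_iff_eq_zero hcont.neg.continuousAt).trans
    neg_eq_zero

end IsSubgradientField

end Subgradient

section Huber

variable {k : ℝ}

lemma continuous_huberPsi (k : ℝ) : Continuous (huberPsi k) := by
  unfold huberPsi
  fun_prop

lemma abs_huberPsi_le (hk : 0 ≤ k) (t : ℝ) : |huberPsi k t| ≤ k :=
  abs_le.2 ⟨le_max_right _ _, max_le (min_le_right _ _) (by linarith)⟩

lemma mul_sub_sq_div_two_le_huberRho {u : ℝ} (hu : |u| ≤ k) (t : ℝ) :
    u * t - u ^ 2 / 2 ≤ huberRho k t := by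
  unfold huberRho
  split_ifs with ht
  · linarith [sq_nonneg (t - u)]
  · have hut : u * t ≤ |u| * |t| := (le_abs_self _).trans_eq (abs_mul u t)
    have hslack : 0 ≤ (k - |u|) * (|t| - (k + |u|) / 2) :=
      mul_nonneg (by linarith) (by linarith)
    linarith [sq_abs u]

lemma huberRho_eq_huberPsi_mul_sub (hk : 0 ≤ k) (t : ℝ) :
    huberRho k t = huberPsi k t * t - huberPsi k t ^ 2 / 2 := by
  unfold huberRho huberPsi
  split_ifs with ht
  · rw [min_eq_left (abs_le.1 ht).2, max_eq_left (abs_le.1 ht).1]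
    ring
  · rcases lt_abs.1 (not_le.1 ht) with hkt | hkt
    · rw [min_eq_right hkt.le, max_eq_left (by linarith), abs_of_nonneg (by linarith)]
    · rw [max_eq_right (min_le_of_left_le (by linarith)), abs_of_nonpos (by linarith)]
      ring

lemma isSubgradientField_huberRho (hk : 0 ≤ k) : IsSubgradientField (huberRho k) (huberPsi k) := by
  intro s t
  calc huberRho k s + inner ℝ (huberPsi k s) (t - s)
      = huberPsi k s * t - huberPsi k s ^ 2 / 2 := by
        rw [huberRho_eq_huberPsi_mul_sub hk, Real.inner_apply]
        ring
    _ ≤ huberRho k t := mul_sub_sq_div_two_le_huberRho (abs_huberPsi_le hk s) t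

end Huber

theorem isMinOn_expected_huberRho_iff_integral_huberPsi_eq_zero_general
    {Ω : Type*} [MeasurableSpace Ω] (μ : Measure Ω) [IsFiniteMeasure μ]
    (k : ℝ) (hk : 0 ≤ k) (X : Ω → ℝ) (hX : Integrable X μ) (q₀ : ℝ) :
    (∀ q : ℝ, ∫ ω, huberRho k (X ω - q₀) ∂μ ≤ ∫ ω, huberRho k (X ω - q) ∂μ)
      ↔ ∫ ω, huberPsi k (X ω - q₀) ∂μ = 0 :=
  (isSubgradientField_huberRho hk).forall_integral_comp_sub_le_iff_integral_eq_zero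
    (continuous_huberPsi k) (abs_huberPsi_le hk) hX q₀

/-- For an integrable real random variable `X`, `q₀` minimizes
`q ↦ E[ρ_k(X − q)]` over `ℝ` if and only if `E[ψ_k(X − q₀)] = 0`. -/
theorem isMinOn_expected_huberRho_iff_integral_huberPsi_eq_zero
    {Ω : Type*} [MeasurableSpace Ω] (P : Measure Ω) [IsProbabilityMeasure P]
    (k : ℝ) (hk : 0 < k) (X : Ω → ℝ) (hX : Integrable X P) (q₀ : ℝ) :
    (∀ q : ℝ, ∫ ω, huberRho k (X ω - q₀) ∂P ≤ ∫ ω, huberRho k (X ω - q) ∂P)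
      ↔ ∫ ω, huberPsi k (X ω - q₀) ∂P = 0 :=
  isMinOn_expected_huberRho_iff_integral_huberPsi_eq_zero_general P k hk.le X hX q₀
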